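/- Rank-4 criterion for quintics: let f = α₀x⁵ + 5α₁x⁴y + 10α₂x³y² + 10α₃x²y³ + 5α₄xy⁴ + α₅y⁵ be a real binary quintic with distinct roots (squarefree over ℂ) that does not have five real roots, whose 3×4 Hankel matrix [[α₀,α₁,α₂,α₃],[α₁,α₂,α₃,α₄],[α₂,α₃,α₄,α₅]] has rank 3, and let g(t) = M₀t³ − M₁t² + M₂t − M₃ where M₀ = det[[α₁,α₂,α₃],[α₂,α₃,α₄],[α₃,α₄,α₅]], M₁ = det[[α₀,α₂,α₃],[α₁,α₃,α₄],[α₂,α₄,α₅]], M₂ = det[[α₀,α₁,α₃],[α₁,α₂,α₄],[α₂,α₃,α₅]], M₃ = det[[α₀,α₁,α₂],[α₁,α₂,α₃],[α₂,α₃,α₄]]. If g has degree 3, exactly one real root, and a pair of distinct complex conjugate roots, then the real rank of f is 4. -/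

import Mathlib

open MvPolynomial

noncomputable section

/-- The real linear binary form `a·x + b·y`. -/
def lin (a b : ℝ) : MvPolynomial (Fin 2) ℝ := C a * X 0 + C b * X 1

/-- `f` is a sum of `r` terms `cⱼ · ℓⱼ^d` with `ℓⱼ` nonzero real linear forms. -/
def HasDecomp (f : MvPolynomial (Fin 2) ℝ) (d r : ℕ) : Prop :=
  ∃ c a b : Fin r → ℝ, (∀ j, (a j, b j) ≠ (0, 0)) ∧
    f = ∑ j, C (c j) * lin (a j) (b j) ^ d

/-- The real (symmetric) rank of a binary form of degree `d`:
the least number of `d`-th powers of real linear forms needed to write `f`. -/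
def realRank (f : MvPolynomial (Fin 2) ℝ) (d : ℕ) : ℕ :=
  sInf {r | HasDecomp f d r}

/-- The set of real projective roots of a binary form. -/
def projRoots (f : MvPolynomial (Fin 2) ℝ) : Set (Projectivization ℝ (Fin 2 → ℝ)) :=
  {p | eval p.rep f = 0}

/-- `f` is a product of `d` pairwise non-proportional real linear forms,
i.e. `f` has `d` distinct real roots. -/
def SplitsDistinct (f : MvPolynomial (Fin 2) ℝ) (d : ℕ) : Prop :=
  ∃ a b : Fin d → ℝ, (∀ j, (a j, b j) ≠ (0, 0)) ∧
    (∀ i j, i ≠ j → a i * b j ≠ a j * b i) ∧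
    f = ∏ j, lin (a j) (b j)

/-- `f` has distinct roots, i.e. it is squarefree as a complex polynomial. -/
def SquarefreeC (f : MvPolynomial (Fin 2) ℝ) : Prop :=
  Squarefree (MvPolynomial.map (algebraMap ℝ ℂ) f)

/-- The linear change of variables of `f` by the matrix `A`: `f(A(x,y))`. -/
def subst (A : Matrix (Fin 2) (Fin 2) ℝ) (f : MvPolynomial (Fin 2) ℝ) :
    MvPolynomial (Fin 2) ℝ :=
  aeval (fun i => C (A i 0) * X 0 + C (A i 1) * X 1) f

/-- The complex rank of a real binary form of degree `d`. -/
def complexRank (f : MvPolynomial (Fin 2) ℝ) (d : ℕ) : ℕ :=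
  sInf {r | ∃ a b : Fin r → ℂ, (∀ j, (a j, b j) ≠ (0, 0)) ∧
    MvPolynomial.map (algebraMap ℝ ℂ) f = ∑ j, (C (a j) * X 0 + C (b j) * X 1) ^ d}

/-!
The forms apolar to `f` of degree three are the multiples of `g`, whose roots `t`, `z`, `z̄` are
not all real. By Sylvester's argument a decomposition of `f` into at most three fifth powers can
only involve the root `t`, and would make `f` a multiple of a fifth power; hence the rank is at
least four.

For the upper bound, Sylvester's theorem over `ℂ` gives `f = c (t x + y)⁵ + Re (γ (z x + y)⁵)`
with `c` real and `γ ≠ 0`. A real change of coordinates brings this, up to a scalar, to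
`a Re(e^{iφ} w)⁵ - Re(e^{iφ} w⁵)`, where `w = x + i y`, `a ≥ 0` and `|φ| ≤ π / 4`. On the unit
circle `w = e^{iθ}` this is `a cos⁵(θ + φ) - cos(5θ + φ)`. If `a cos⁴ φ < 1`, sign changes give
five real roots. If `a cos⁴ φ = 1`, the form is divisible by `y²`. If `a cos⁴ φ > 1`, a pencil of
apolar quartics contains one with four distinct real roots, so four fifth powers suffice.
-/

open Finset Filter Topology Matrix

section BinaryForm

variable {R : Type*} [CommRing R] {d : ℕ}

/-- The binary form `∑ᵢ (d choose i) αᵢ x^(d-i) y^i` with divided coefficients `αᵢ`. Only the values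
`α i` with `i ≤ d` matter; sequences are indexed by all of `ℕ` so that shifted indices need no
casts. -/
def binaryForm (d : ℕ) (α : ℕ → R) : MvPolynomial (Fin 2) R :=
  ∑ i ∈ range (d + 1), C (d.choose i * α i) * X 0 ^ (d - i) * X 1 ^ i

theorem eval_binaryForm (α : ℕ → R) (v : Fin 2 → R) :
    eval v (binaryForm d α) =
      ∑ i ∈ range (d + 1), d.choose i * α i * v 0 ^ (d - i) * v 1 ^ i := by
  simp [binaryForm]

theorem isHomogeneous_binaryForm (α : ℕ → R) : (binaryForm d α).IsHomogeneous d := by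
  refine IsHomogeneous.sum _ _ _ fun i hi => ?_
  have h := (isHomogeneous_C_mul_X_pow (d.choose i * α i) (0 : Fin 2) (d - i)).mul
    (isHomogeneous_X_pow (R := R) (1 : Fin 2) i)
  rwa [Nat.sub_add_cancel (Nat.lt_succ_iff.mp (mem_range.mp hi))] at h

theorem binaryForm_congr {α β : ℕ → R} (h : ∀ i ≤ d, α i = β i) :
    binaryForm d α = binaryForm d β :=
  sum_congr rfl fun i hi => by rw [h i (Nat.lt_succ_iff.mp (mem_range.mp hi))]

theorem binaryForm_sum_pow_mul_pow {r : ℕ} (c a b : Fin r → R) :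
    binaryForm d (fun i => ∑ j, c j * (a j ^ (d - i) * b j ^ i)) =
      ∑ j, C (c j) * (C (a j) * X 0 + C (b j) * X 1) ^ d := by
  have hpow (j : Fin r) : (C (a j) * X 0 + C (b j) * X 1 : MvPolynomial (Fin 2) R) ^ d =
      ∑ i ∈ range (d + 1),
        (C (b j) * X 1) ^ i * (C (a j) * X 0) ^ (d - i) * C (d.choose i : R) := by
    rw [add_comm, add_pow]
    simp only [map_natCast]
  simp only [binaryForm, hpow, mul_pow, mul_sum, map_mul, map_sum, map_pow, map_natCast, sum_mul]
  rw [sum_comm]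
  exact sum_congr rfl fun j _ => sum_congr rfl fun i _ => by ring

theorem coeff_binaryForm (α : ℕ → R) {i : ℕ} (hi : i ≤ d) :
    coeff (Finsupp.single 0 (d - i) + Finsupp.single 1 i) (binaryForm d α) = d.choose i * α i := by
  have hterm (k : ℕ) : C (d.choose k * α k) * X 0 ^ (d - k) * X 1 ^ k =
      monomial (Finsupp.single (0 : Fin 2) (d - k) + Finsupp.single 1 k) (d.choose k * α k) := by
    rw [C_mul_X_pow_eq_monomial, X_pow_eq_monomial, monomial_mul, mul_one]
  have hexp (k : ℕ) : (Finsupp.single (0 : Fin 2) (d - k) + Finsupp.single 1 k =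
      Finsupp.single 0 (d - i) + Finsupp.single 1 i) ↔ k = i :=
    ⟨fun h => by simpa using DFunLike.congr_fun h 1, fun h => by rw [h]⟩
  simp only [binaryForm, hterm, coeff_sum, coeff_monomial, hexp, sum_ite_eq', mem_range,
    Nat.lt_succ_iff, hi, if_true]

theorem binaryForm_inj [IsDomain R] [CharZero R] {α β : ℕ → R} :
    binaryForm d α = binaryForm d β ↔ ∀ i ≤ d, α i = β i := by
  refine ⟨fun h i hi => ?_, binaryForm_congr⟩
  have hcoeff := congrArg (coeff (Finsupp.single 0 (d - i) + Finsupp.single 1 i)) h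
  rw [coeff_binaryForm α hi, coeff_binaryForm β hi] at hcoeff
  exact mul_left_cancel₀ (Nat.cast_ne_zero.mpr (Nat.choose_pos hi).ne') hcoeff

end BinaryForm

section Catalecticant

variable {K : Type*} [Field K] {m n r : ℕ}

/-- The `(m + 1) × (n + 1)` catalecticant (Hankel) matrix of a sequence of divided coefficients. Its
kernel consists of the degree `n` forms apolar to `binaryForm (m + n) α`. -/
def catalecticant (m n : ℕ) (α : ℕ → K) : Matrix (Fin (m + 1)) (Fin (n + 1)) K :=
  of fun i k => α (i + k)

theorem catalecticant_mulVec_apply (α : ℕ → K) (q : Fin (n + 1) → K) (i : Fin (m + 1)) :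
    (catalecticant m n α *ᵥ q) i = ∑ k : Fin (n + 1), α (i + k) * q k :=
  rfl

theorem eq_zero_of_catalecticant_mulVec_eq_zero {β : ℕ → K} {q : Fin (n + 1) → K} (hq : q 0 ≠ 0)
    (hker : catalecticant m n β *ᵥ q = 0) (htail : ∀ i, m < i → i ≤ m + n → β i = 0) :
    ∀ i ≤ m + n, β i = 0 := by
  suffices h : ∀ l ≤ m, β (m - l) = 0 by
    intro i hi
    rcases lt_or_ge m i with hmi | him
    · exact htail i hmi hi
    · rw [← Nat.sub_sub_self him]
      exact h _ (Nat.sub_le _ _)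
  intro l
  induction l using Nat.strong_induction_on with
  | _ l ih =>
    intro hl
    have hrow := congrFun hker ⟨m - l, by omega⟩
    have hlater (k : Fin n) : β (m - l + k.succ) = 0 := by
      rcases lt_or_ge m (m - l + k.succ) with h | h
      · exact htail _ h (by omega)
      · have hk := Fin.val_succ k
        rw [show m - l + (k.succ : ℕ) = m - (l - k.succ) by omega]
        exact ih _ (by omega) (by omega)
    simpa only [catalecticant_mulVec_apply, Fin.sum_univ_succ (n := n), hlater, zero_mul,
      sum_const_zero, add_zero, Fin.val_zero, Pi.zero_apply, mul_eq_zero, hq, or_false] using hrow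

theorem catalecticant_sum_eq_mul (c a b : Fin r → K) :
    catalecticant m n (fun i => ∑ j, c j * (a j ^ (m + n - i) * b j ^ i)) =
      of (fun (i : Fin (m + 1)) j => c j * (a j ^ (m - i : ℕ) * b j ^ (i : ℕ))) *
        of (fun j (k : Fin (n + 1)) => a j ^ (n - k : ℕ) * b j ^ (k : ℕ)) := by
  ext i k
  simp only [catalecticant, of_apply, mul_apply]
  refine sum_congr rfl fun j _ => ?_
  rw [show m + n - (i + k : ℕ) = (m - i) + (n - k) by omega, pow_add, pow_add]
  ring

theorem exists_eq_sum_mul_pow_of_catalecticant_mulVec_eq_zero {w : Fin r → K}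
    (hw : Function.Injective w) {q : Fin (r + 1) → K} (hq : q 0 ≠ 0)
    (hroot : ∀ j, ∑ k : Fin (r + 1), w j ^ (r - k : ℕ) * q k = 0) {α : ℕ → K}
    (hker : catalecticant m r α *ᵥ q = 0) :
    ∃ c : Fin r → K, ∀ i ≤ m + r, α i = ∑ j, c j * w j ^ (m + r - i) := by
  have hunit : IsUnit (vandermonde w)ᵀ := by
    rw [isUnit_iff_isUnit_det, det_transpose, isUnit_iff_ne_zero]
    exact det_vandermonde_ne_zero_iff.mpr hw
  obtain ⟨c, hc⟩ := mulVec_surjective_iff_isUnit.mpr hunit fun i : Fin r => α (m + r - i)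
  let β : ℕ → K := fun i => ∑ j, c j * (w j ^ (m + r - i) * 1 ^ i)
  have hβ : catalecticant m r β *ᵥ q = 0 := by
    have hpow : (of fun j (k : Fin (r + 1)) => w j ^ (r - k : ℕ) * 1 ^ (k : ℕ)) *ᵥ q = 0 :=
      funext fun j => by simpa [mulVec, dotProduct] using hroot j
    rw [catalecticant_sum_eq_mul c w fun _ => 1, ← mulVec_mulVec, hpow, mulVec_zero]
  have htail (i : ℕ) (hmi : m < i) (hi : i ≤ m + r) : (α - β) i = 0 := by
    have h := congrFun hc ⟨m + r - i, by omega⟩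
    simp only [mulVec, dotProduct, transpose_apply, vandermonde_apply, Nat.sub_sub_self hi] at h
    simp [β, ← h, mul_comm]
  refine ⟨c, fun i hi => ?_⟩
  have hsub : catalecticant m r (α - β) *ᵥ q = 0 := by
    rw [show catalecticant m r (α - β) = catalecticant m r α - catalecticant m r β from rfl,
      sub_mulVec, hker, hβ, sub_zero]
  have h := eq_zero_of_catalecticant_mulVec_eq_zero hq hsub htail i hi
  simpa [β] using sub_eq_zero.mp h

-- With at most `rank` many summands the left factor of `catalecticant_sum_eq_mul` is injective.
theorem sum_mul_pow_eq_zero_of_catalecticant_mulVec_eq_zero (c a b : Fin r → K) {α : ℕ → K}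
    (hα : ∀ i ≤ m + n, α i = ∑ j, c j * (a j ^ (m + n - i) * b j ^ i))
    (hr : r ≤ (catalecticant m n α).rank) {q : Fin (n + 1) → K}
    (hker : catalecticant m n α *ᵥ q = 0) (j : Fin r) :
    ∑ k : Fin (n + 1), a j ^ (n - k : ℕ) * b j ^ (k : ℕ) * q k = 0 := by
  have hsum : catalecticant m n α =
      catalecticant m n fun i => ∑ j, c j * (a j ^ (m + n - i) * b j ^ i) := by
    ext i k
    exact hα _ (by omega)
  rw [hsum, catalecticant_sum_eq_mul] at hr hker
  set V := of fun (i : Fin (m + 1)) j => c j * (a j ^ (m - i : ℕ) * b j ^ (i : ℕ))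
  have hV : Function.Injective V.mulVec := by
    rw [mulVec_injective_iff, linearIndependent_iff_card_le_finrank_span, Fintype.card_fin,
      Set.finrank, ← rank_eq_finrank_span_cols]
    exact hr.trans (rank_mul_le_left _ _)
  rw [← mulVec_mulVec] at hker
  exact congrFun (hV (hker.trans (mulVec_zero V).symm)) j

end Catalecticant

section RealForm

variable {d r : ℕ} {f : MvPolynomial (Fin 2) ℝ}

theorem hasDecomp_binaryForm_iff {α : ℕ → ℝ} :
    HasDecomp (binaryForm d α) d r ↔ ∃ c a b : Fin r → ℝ, (∀ j, (a j, b j) ≠ (0, 0)) ∧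
      ∀ i ≤ d, α i = ∑ j, c j * (a j ^ (d - i) * b j ^ i) := by
  simp only [HasDecomp, lin, ← binaryForm_sum_pow_mul_pow, binaryForm_inj]

theorem hasDecomp_of_catalecticant_mulVec_eq_zero {m : ℕ} {w : Fin r → ℝ}
    (hw : Function.Injective w) {q : Fin (r + 1) → ℝ} (hq : q 0 ≠ 0)
    (hroot : ∀ j, ∑ k : Fin (r + 1), w j ^ (r - k : ℕ) * q k = 0) {α : ℕ → ℝ}
    (hker : catalecticant m r α *ᵥ q = 0) : HasDecomp (binaryForm (m + r) α) (m + r) r := by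
  obtain ⟨c, hc⟩ := exists_eq_sum_mul_pow_of_catalecticant_mulVec_eq_zero hw hq hroot hker
  exact hasDecomp_binaryForm_iff.mpr ⟨c, w, 1, by simp, by simpa using hc⟩

theorem not_squarefreeC_of_lin_sq_dvd {a b : ℝ} (h : lin a b ^ 2 ∣ f) : ¬ SquarefreeC f := by
  intro hsf
  have hdvd := map_dvd (MvPolynomial.map (algebraMap ℝ ℂ)) h
  rw [map_pow, sq] at hdvd
  have hunit := (hsf _ hdvd).map (eval ![(b : ℂ), -a])
  have hzero : eval ![(b : ℂ), -a] (MvPolynomial.map (algebraMap ℝ ℂ) (lin a b)) = 0 := by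
    simp [lin, mul_comm]
  exact not_isUnit_zero (hzero ▸ hunit)

section Substitution

variable {A : Matrix (Fin 2) (Fin 2) ℝ}

theorem eval_subst (A : Matrix (Fin 2) (Fin 2) ℝ) (f : MvPolynomial (Fin 2) ℝ) (v : Fin 2 → ℝ) :
    eval v (subst A f) = eval (A *ᵥ v) f := by
  have hv : A *ᵥ v = fun i => A i 0 * v 0 + A i 1 * v 1 :=
    funext fun i => by simp only [mulVec, dotProduct, Fin.sum_univ_two]
  rw [subst, aeval_eq_bind₁, ← coe_aeval_eq_eval, RingHom.coe_coe, aeval_bind₁, hv]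
  simp [aeval_eq_eval]

theorem subst_lin (A : Matrix (Fin 2) (Fin 2) ℝ) (a b : ℝ) :
    subst A (lin a b) = lin (a * A 0 0 + b * A 1 0) (a * A 0 1 + b * A 1 1) := by
  simp only [subst, lin, map_add, map_mul, algHom_C, aeval_X, algebraMap_eq]
  ring

theorem eq_zero_of_lin_subst_eq_zero (hA : A.det ≠ 0) {a b : ℝ}
    (h : (a * A 0 0 + b * A 1 0, a * A 0 1 + b * A 1 1) = (0, 0)) : (a, b) = (0, 0) := by
  obtain ⟨h0, h1⟩ := Prod.mk.inj h
  rw [det_fin_two] at hA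
  refine Prod.ext (mul_left_cancel₀ hA ?_) (mul_left_cancel₀ hA ?_)
  · linear_combination A 1 1 * h0 - A 1 0 * h1
  · linear_combination A 0 0 * h1 - A 0 1 * h0

theorem HasDecomp.C_mul_subst (hf : HasDecomp f d r) (ρ : ℝ) (hA : A.det ≠ 0) :
    HasDecomp (C ρ * subst A f) d r := by
  obtain ⟨c, a, b, hab, rfl⟩ := hf
  refine ⟨fun j => ρ * c j, fun j => a j * A 0 0 + b j * A 1 0, fun j => a j * A 0 1 + b j * A 1 1,
    fun j h => hab j (eq_zero_of_lin_subst_eq_zero hA h), ?_⟩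
  simp only [← subst_lin, map_mul, mul_assoc, ← mul_sum]
  simp [subst]

theorem SplitsDistinct.C_mul (hf : SplitsDistinct f (d + 1)) {ρ : ℝ} (hρ : ρ ≠ 0) :
    SplitsDistinct (C ρ * f) (d + 1) := by
  obtain ⟨a, b, hab, hprop, rfl⟩ := hf
  let s : Fin (d + 1) → ℝ := Function.update 1 0 ρ
  have hs (j : Fin (d + 1)) : s j ≠ 0 := by
    rcases eq_or_ne j 0 with rfl | hj
    · simpa [s]
    · simp [s, hj]
  refine ⟨s * a, s * b, fun j h => hab j ?_, fun i j hij h => hprop i j hij ?_, ?_⟩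
  · simpa [hs j] using h
  · refine mul_left_cancel₀ (mul_ne_zero (hs i) (hs j)) ?_
    simp only [Pi.mul_apply] at h
    linear_combination h
  · have hlin (j : Fin (d + 1)) : lin (s j * a j) (s j * b j) = C (s j) * lin (a j) (b j) := by
      simp only [lin, C_mul]
      ring
    simp only [Pi.mul_apply, hlin, prod_mul_distrib, ← map_prod]
    simp [s, Function.update_apply]

theorem SplitsDistinct.subst (hf : SplitsDistinct f d) (hA : A.det ≠ 0) :
    SplitsDistinct (subst A f) d := by
  obtain ⟨a, b, hab, hprop, rfl⟩ := hf
  refine ⟨fun j => a j * A 0 0 + b j * A 1 0, fun j => a j * A 0 1 + b j * A 1 1,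
    fun j h => hab j (eq_zero_of_lin_subst_eq_zero hA h), fun i j hij h => hprop i j hij ?_, ?_⟩
  · rw [det_fin_two] at hA
    refine mul_left_cancel₀ hA ?_
    linear_combination h
  · simp only [← subst_lin]
    simp [_root_.subst]

theorem lin_sq_dvd_C_mul_subst {a b : ℝ} (h : lin a b ^ 2 ∣ f) (ρ : ℝ)
    (A : Matrix (Fin 2) (Fin 2) ℝ) :
    lin (a * A 0 0 + b * A 1 0) (a * A 0 1 + b * A 1 1) ^ 2 ∣ C ρ * subst A f := by
  rw [← subst_lin]
  have hdvd : subst A (lin a b ^ 2) ∣ subst A f := map_dvd _ h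
  rw [subst, map_pow] at hdvd
  exact hdvd.mul_left _

end Substitution

theorem exists_eq_C_mul_prod_lin {F : MvPolynomial (Fin 2) ℝ} (hF : F.IsHomogeneous d)
    {v : Fin d → Fin 2 → ℝ} (hv : ∀ j, v j 1 ≠ 0)
    (hinj : Function.Injective fun j => v j 0 / v j 1) (hroot : ∀ j, eval (v j) F = 0) :
    ∃ ρ : ℝ, F = C ρ * ∏ j, lin 1 (-(v j 0 / v j 1)) := by
  set p : Polynomial ℝ := aeval ![Polynomial.X, 1] F with hpF
  have hp : p.homogenize d = F := Polynomial.homogenize_eq_of_isHomogeneous hF hpF.symm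
  have hdeg : p.natDegree ≤ d := by
    rw [← mul_one d]
    refine aeval_natDegree_le F hF.totalDegree_le _ fun i => ?_
    fin_cases i <;> simp
  have hdvd : ∏ j, (Polynomial.X - Polynomial.C (v j 0 / v j 1)) ∣ p := by
    refine Finset.prod_dvd_of_coprime
      ((Polynomial.pairwise_coprime_X_sub_C hinj).set_pairwise _) fun j _ => ?_
    have h := hroot j
    rw [← hp, Polynomial.eval_homogenize hdeg _ (hv j)] at h
    exact Polynomial.dvd_iff_isRoot.mpr ((mul_eq_zero_iff_right (pow_ne_zero _ (hv j))).mp h)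
  have hfactor := Polynomial.eq_leadingCoeff_mul_of_monic_of_dvd_of_natDegree_le
    (Polynomial.monic_prod_X_sub_C _ univ) hdvd (by simpa using hdeg)
  have hprod : (∏ j, (Polynomial.X - Polynomial.C (v j 0 / v j 1))).homogenize d =
      ∏ j, lin 1 (-(v j 0 / v j 1)) := by
    have h := Polynomial.homogenize_finsetProd (s := univ) (n := fun _ : Fin d => 1)
      (p := fun j => Polynomial.X - Polynomial.C (v j 0 / v j 1)) fun j _ => by simp
    simpa [lin, sub_eq_add_neg] using h
  exact ⟨p.leadingCoeff, by rw [← hprod, ← Polynomial.homogenize_C_mul, ← hfactor, hp]⟩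

theorem injOn_cos_div_sin :
    Set.InjOn (fun θ => Real.cos θ / Real.sin θ) (Set.Ioo 0 Real.pi) := by
  intro θ hθ η hη h
  rw [div_eq_div_iff (Real.sin_pos_of_mem_Ioo hθ).ne' (Real.sin_pos_of_mem_Ioo hη).ne'] at h
  have hsin : Real.sin (η - θ) = 0 := by
    rw [Real.sin_sub]
    linear_combination h
  have hsub := (Real.sin_eq_zero_iff_of_lt_of_lt (by linarith [hθ.2, hη.1])
    (by linarith [hθ.1, hη.2])).mp hsin
  linarith

theorem splitsDistinct_of_eval_cos_sin_eq_zero {F : MvPolynomial (Fin 2) ℝ}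
    (hF : F.IsHomogeneous (d + 1)) (hF0 : F ≠ 0) {θ : Fin (d + 1) → ℝ}
    (hθ : Function.Injective θ) (hmem : ∀ j, θ j ∈ Set.Ioo 0 Real.pi)
    (hroot : ∀ j, eval ![Real.cos (θ j), Real.sin (θ j)] F = 0) : SplitsDistinct F (d + 1) := by
  have hinj : Function.Injective fun j => Real.cos (θ j) / Real.sin (θ j) := fun i j h =>
    hθ (injOn_cos_div_sin (hmem i) (hmem j) h)
  obtain ⟨ρ, hρ⟩ := exists_eq_C_mul_prod_lin hF
    (fun j => (Real.sin_pos_of_mem_Ioo (hmem j)).ne') hinj hroot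
  rw [hρ]
  refine SplitsDistinct.C_mul ⟨1, _, by simp, fun i j hij h => hij (hinj ?_), rfl⟩ ?_
  · simpa using h.symm
  · rintro rfl
    simp [hρ] at hF0

end RealForm

theorem lin_pow_dvd_binaryForm {d : ℕ} {α : ℕ → ℝ} {c t : ℝ}
    (hα : ∀ i ≤ d, α i = c * t ^ (d - i)) : lin t 1 ^ d ∣ binaryForm d α := by
  have h := binaryForm_sum_pow_mul_pow (d := d) (r := 1) (fun _ => c) (fun _ => t) fun _ => 1
  rw [binaryForm_congr (β := fun i => ∑ _ : Fin 1, c * (t ^ (d - i) * 1 ^ i)) (by simpa using hα),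
    h, univ_unique, sum_singleton]
  exact dvd_mul_left _ _

section ApolarCubic

variable {α : ℕ → ℝ} {t : ℝ} {z : ℂ}

/-- The coefficients of the real cubic form `(x - ty)(x - zy)(x - z̄y)`, by decreasing powers of
`x`. -/
def realComplexCubic (t : ℝ) (z : ℂ) : Fin 4 → ℝ :=
  ![1, -(t + 2 * z.re), 2 * z.re * t + Complex.normSq z, -(t * Complex.normSq z)]

theorem sum_mul_realComplexCubic (t : ℝ) (z : ℂ) (a b : ℝ) :
    ∑ k : Fin 4, a ^ (3 - k : ℕ) * b ^ (k : ℕ) * realComplexCubic t z k =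
      (a - t * b) * ((a - z.re * b) ^ 2 + (z.im * b) ^ 2) := by
  simp [realComplexCubic, Fin.sum_univ_four, Complex.normSq_apply]
  ring

theorem four_le_of_hasDecomp (hsf : SquarefreeC (binaryForm 5 α))
    (hrank : (catalecticant 2 3 α).rank = 3) (hz : z.im ≠ 0)
    (hker : catalecticant 2 3 α *ᵥ realComplexCubic t z = 0) {r : ℕ}
    (hr : HasDecomp (binaryForm 5 α) 5 r) : 4 ≤ r := by
  by_contra! hlt
  obtain ⟨c, a, b, hab, hα⟩ := hasDecomp_binaryForm_iff.mp hr
  have ha (j : Fin r) : a j = t * b j := by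
    have h :=
      sum_mul_pow_eq_zero_of_catalecticant_mulVec_eq_zero (m := 2) c a b hα (by omega) hker j
    rw [sum_mul_realComplexCubic] at h
    refine sub_eq_zero.mp ((mul_eq_zero_iff_right fun hquad => hab j ?_).mp h)
    have hb : b j = 0 := by
      have him : (z.im * b j) ^ 2 = 0 := by
        nlinarith [sq_nonneg (a j - z.re * b j), sq_nonneg (z.im * b j)]
      simpa [hz] using him
    simpa [hb] using hquad
  have hgeom (i : ℕ) (hi : i ≤ 5) : α i = (∑ j, c j * b j ^ 5) * t ^ (5 - i) := by
    rw [hα i hi, sum_mul]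
    refine sum_congr rfl fun j _ => ?_
    nth_rw 2 [← Nat.sub_add_cancel hi]
    rw [ha, mul_pow, pow_add]
    ring
  exact not_squarefreeC_of_lin_sq_dvd
    ((pow_dvd_pow _ (by norm_num)).trans (lin_pow_dvd_binaryForm hgeom)) hsf

theorem exists_real_add_re_of_catalecticant_mulVec_eq_zero (hz : z.im ≠ 0)
    (hker : catalecticant 2 3 α *ᵥ realComplexCubic t z = 0) :
    ∃ (c : ℝ) (γ : ℂ), ∀ i ≤ 5, α i = c * t ^ (5 - i) + (γ * z ^ (5 - i)).re := by
  have hroots : Function.Injective ![(t : ℂ), z, starRingEnd ℂ z] := by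
    have hzt : z ≠ t := fun h => hz (by simp [h])
    have hconj : starRingEnd ℂ z ≠ t := fun h => hz (by simpa using congrArg Complex.im h)
    have hzz : z ≠ starRingEnd ℂ z := fun h => hz (Complex.conj_eq_iff_im.mp h.symm)
    intro i j
    fin_cases i <;> fin_cases j <;> simp [hzt, hconj, hzz, hzt.symm, hconj.symm, hzz.symm]
  have hroot (j : Fin 3) : ∑ k : Fin 4, ![(t : ℂ), z, starRingEnd ℂ z] j ^ (3 - k : ℕ) *
      (realComplexCubic t z k : ℂ) = 0 := by
    have hsum : z + starRingEnd ℂ z = 2 * z.re := by rw [Complex.add_conj]; push_cast; ring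
    fin_cases j <;>
      simp [realComplexCubic, Fin.sum_univ_four, ← Complex.mul_conj, ← hsum] <;> ring
  have hkerC :
      catalecticant 2 3 (fun i => (α i : ℂ)) *ᵥ (fun k => (realComplexCubic t z k : ℂ)) = 0 :=
    funext fun i => by
      simpa [catalecticant_mulVec_apply] using congrArg Complex.ofReal (congrFun hker i)
  obtain ⟨c, hc⟩ := exists_eq_sum_mul_pow_of_catalecticant_mulVec_eq_zero hroots
    (by simp [realComplexCubic]) hroot hkerC
  refine ⟨(c 0).re, c 1 + starRingEnd ℂ (c 2), fun i hi => ?_⟩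
  have h := congrArg Complex.re (hc i hi)
  have hconj : (c 2 * starRingEnd ℂ z ^ (5 - i)).re = (starRingEnd ℂ (c 2) * z ^ (5 - i)).re := by
    rw [← Complex.conj_re]
    simp
  simpa [Fin.sum_univ_three, add_mul, hconj, ← Complex.ofReal_pow, add_assoc] using h

end ApolarCubic

section NormalForm

theorem eval_binaryForm_add_re {d : ℕ} (c a b : ℝ) (γ z w : ℂ) (v : Fin 2 → ℝ) :
    eval v (binaryForm d fun i => c * (a ^ (d - i) * b ^ i) + (γ * (z ^ (d - i) * w ^ i)).re) =
      c * (a * v 0 + b * v 1) ^ d + (γ * (z * v 0 + w * v 1) ^ d).re := by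
  have hre : (γ * (z * v 0 + w * v 1) ^ d).re =
      ∑ i ∈ range (d + 1),
        d.choose i * (γ * (z ^ (d - i) * w ^ i)).re * v 0 ^ (d - i) * v 1 ^ i := by
    rw [add_comm, add_pow, mul_sum, Complex.re_sum]
    refine sum_congr rfl fun i _ => ?_
    have hreal : γ * ((w * v 1) ^ i * (z * v 0) ^ (d - i) * d.choose i) =
        ((d.choose i * v 0 ^ (d - i) * v 1 ^ i : ℝ) : ℂ) * (γ * (z ^ (d - i) * w ^ i)) := by
      push_cast
      ring
    rw [hreal, Complex.re_ofReal_mul]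
    ring
  rw [eval_binaryForm, hre, add_comm (a * v 0), add_pow, mul_sum, ← sum_add_distrib]
  exact sum_congr rfl fun i _ => by ring

/-- The divided coefficients of the normal quintic `a Re(e^{iφ}w)⁵ - Re(e^{iφ}w⁵)`, `w = x + iy`. -/
def normalCoeff (a φ : ℝ) (i : ℕ) : ℝ :=
  a * (Real.cos φ ^ (5 - i) * (-Real.sin φ) ^ i) - (Complex.exp (φ * Complex.I) * Complex.I ^ i).re

theorem eval_normalQuintic (a φ : ℝ) (v : Fin 2 → ℝ) :
    eval v (binaryForm 5 (normalCoeff a φ)) =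
      a * (Complex.exp (φ * Complex.I) * (v 0 + v 1 * Complex.I)).re ^ 5 -
        (Complex.exp (φ * Complex.I) * (v 0 + v 1 * Complex.I) ^ 5).re := by
  have hre : (Complex.exp (φ * Complex.I) * (v 0 + v 1 * Complex.I)).re =
      Real.cos φ * v 0 + -Real.sin φ * v 1 := by
    simp [Complex.exp_ofReal_mul_I_re, Complex.exp_ofReal_mul_I_im, sub_eq_add_neg]
  have h := eval_binaryForm_add_re (d := 5) a (Real.cos φ) (-Real.sin φ)
    (-Complex.exp (φ * Complex.I)) 1 Complex.I v
  simp only [one_pow, one_mul, neg_mul _ (_ ^ _), Complex.neg_re, ← sub_eq_add_neg,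
    mul_comm Complex.I] at h
  rw [hre, ← h]
  rfl

theorem exists_polar_param (c : ℝ) {κ : ℂ} (hκ : κ ≠ 0) :
    ∃ ρ a φ : ℝ, ρ ≠ 0 ∧ 0 ≤ a ∧ |φ| ≤ Real.pi / 4 ∧ c = ρ * a ∧
      κ * Complex.exp (φ * Complex.I) ^ 4 = -ρ := by
  obtain ⟨ρ, hnorm, hsign⟩ : ∃ ρ : ℝ, |ρ| = ‖κ‖ ∧ 0 ≤ c / ρ := by
    rcases le_total 0 c with hc | hc
    · exact ⟨‖κ‖, abs_norm κ, div_nonneg hc (norm_nonneg κ)⟩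
    · exact ⟨-‖κ‖, by simp, div_nonneg_of_nonpos hc (by simp)⟩
  have hρ : ρ ≠ 0 := by
    rintro rfl
    simp [eq_comm, hκ] at hnorm
  have hρ' : (ρ : ℂ) ≠ 0 := Complex.ofReal_ne_zero.mpr hρ
  set u : ℂ := -κ / ρ with hu
  have hu1 : ‖u‖ = 1 := by
    rw [hu, norm_div, norm_neg, Complex.norm_real, Real.norm_eq_abs, hnorm,
      div_self (norm_ne_zero_iff.mpr hκ)]
  refine ⟨ρ, c / ρ, -u.arg / 4, hρ, hsign, ?_, by field_simp, ?_⟩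
  · rw [abs_div, abs_neg, abs_of_pos (four_pos : (0 : ℝ) < 4)]
    gcongr
    exact Complex.abs_arg_le_pi u
  · have hpolar : Complex.exp (u.arg * Complex.I) = u := by
      simpa [hu1] using Complex.norm_mul_exp_arg_mul_I u
    have harg : Complex.exp (u.arg * Complex.I) *
        Complex.exp ((-u.arg / 4 : ℝ) * Complex.I) ^ 4 = 1 := by
      rw [← Complex.exp_nat_mul, ← Complex.exp_add, ← Complex.exp_zero]
      congr 1
      push_cast
      ring
    rw [hpolar] at harg
    rw [show κ = -ρ * u by rw [hu]; field_simp, mul_assoc, harg, mul_one]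

theorem exists_mulVec_eq_mul {z ν : ℂ} (hz : z.im ≠ 0) (hν : ν ≠ 0) :
    ∃ A : Matrix (Fin 2) (Fin 2) ℝ, A.det ≠ 0 ∧
      ∀ v, ((A *ᵥ v) 0 + (A *ᵥ v) 1 * Complex.I : ℂ) = ν * (z * v 0 + v 1) := by
  refine ⟨!![(ν * z).re, ν.re; (ν * z).im, ν.im], ?_, fun v => ?_⟩
  · have hdet : (!![(ν * z).re, ν.re; (ν * z).im, ν.im]).det = -(Complex.normSq ν * z.im) := by
      rw [det_fin_two_of, Complex.mul_re, Complex.mul_im, Complex.normSq_apply]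
      ring
    rw [hdet, neg_ne_zero]
    exact mul_ne_zero (Complex.normSq_pos.mpr hν).ne' hz
  · apply Complex.ext <;> simp [mulVec, dotProduct] <;> ring

theorem exists_eq_C_mul_subst_normalQuintic {α : ℕ → ℝ} {t c : ℝ} {z γ : ℂ} (hz : z.im ≠ 0)
    (hγ : γ ≠ 0) (hα : ∀ i ≤ 5, α i = c * t ^ (5 - i) + (γ * z ^ (5 - i)).re) :
    ∃ (ρ a φ : ℝ) (A : Matrix (Fin 2) (Fin 2) ℝ), ρ ≠ 0 ∧ 0 ≤ a ∧ |φ| ≤ Real.pi / 4 ∧ A.det ≠ 0 ∧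
      binaryForm 5 α = C ρ * subst A (binaryForm 5 (normalCoeff a φ)) := by
  -- `μ` is chosen so that the real root becomes the real part: `Re (μ (z x + y)) = t x + y`.
  set μ : ℂ := ⟨1, (z.re - t) / z.im⟩
  have hμ : μ ≠ 0 := fun h => one_ne_zero (congrArg Complex.re h)
  have hre (v : Fin 2 → ℝ) : (μ * (z * v 0 + v 1)).re = t * v 0 + v 1 := by
    simp only [μ, Complex.mul_re, Complex.add_re, Complex.ofReal_re, Complex.ofReal_im, mul_zero,
      sub_zero, one_mul, Complex.add_im, Complex.mul_im, zero_add, add_zero]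
    field_simp
    ring
  obtain ⟨ρ, a, φ, hρ, ha, hφ, hc, hκ⟩ := exists_polar_param c (div_ne_zero hγ (pow_ne_zero 5 hμ))
  set e := Complex.exp (φ * Complex.I)
  have he : e ≠ 0 := Complex.exp_ne_zero _
  obtain ⟨A, hA, hmul⟩ := exists_mulVec_eq_mul hz (div_ne_zero hμ he)
  refine ⟨ρ, a, φ, A, hρ, ha, hφ, hA, funext fun v => ?_⟩
  have hleft := eval_binaryForm_add_re (d := 5) c t 1 γ z 1 v
  simp only [one_pow, mul_one, one_mul] at hleft
  rw [binaryForm_congr hα, hleft, eval_mul, eval_C, eval_subst, eval_normalQuintic, hmul]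
  set l : ℂ := z * v 0 + v 1
  have hlinear : e * (μ / e * l) = μ * l := by
    rw [← mul_assoc, mul_div_cancel₀ _ he]
  have hquintic : γ * l ^ 5 = -ρ * (e * (μ / e * l) ^ 5) := by
    field_simp at hκ ⊢
    linear_combination l ^ 5 * hκ
  rw [hlinear, hquintic, hre, hc, ← Complex.ofReal_neg, Complex.re_ofReal_mul]
  ring

end NormalForm

section SignChanges

theorem exists_strictMono_roots_of_mul_neg {n : ℕ} {P : ℝ → ℝ} (hP : Continuous P)
    {x : Fin (n + 1) → ℝ} (hx : StrictMono x)
    (hsign : ∀ i : Fin n, P (x i.castSucc) * P (x i.succ) < 0) :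
    ∃ r : Fin n → ℝ, StrictMono r ∧ (∀ i, r i ∈ Set.Ioo (x 0) (x (Fin.last n))) ∧
      ∀ i, P (r i) = 0 := by
  have hroot (i : Fin n) : ∃ r ∈ Set.Ioo (x i.castSucc) (x i.succ), P r = 0 := by
    have hle := (hx i.castSucc_lt_succ).le
    rcases mul_neg_iff.mp (hsign i) with ⟨hl, hr⟩ | ⟨hl, hr⟩
    · exact intermediate_value_Ioo' hle hP.continuousOn ⟨hr, hl⟩
    · exact intermediate_value_Ioo hle hP.continuousOn ⟨hl, hr⟩
  choose r hr hr0 using hroot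
  refine ⟨r, fun i j hij => ?_, fun i => ⟨?_, ?_⟩, hr0⟩
  · exact (hr i).2.trans_le ((hx.monotone (Fin.succ_le_castSucc_iff.mpr hij)).trans (hr j).1.le)
  · exact (hx.monotone (Fin.zero_le _)).trans_lt (hr i).1
  · exact (hr i).2.trans_le (hx.monotone (Fin.le_last _))

-- For `ε = 0` the quartic has a double root at `0` and two simple roots; the perturbation is
-- negative at `0`, which splits the double root into two real ones.
theorem exists_four_roots_of_perturbation {m n c : ℝ} (hm : 0 < m) (hn : 0 < n) (hc : 0 < c)
    (s : ℝ) : ∃ (ε : ℝ) (w : Fin 4 → ℝ), Function.Injective w ∧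
      ∀ j, w j ^ 2 * (m - n * w j ^ 2) - ε * (1 + w j ^ 2) * (s * w j + c) = 0 := by
  let Q (ε w : ℝ) : ℝ := w ^ 2 * (m - n * w ^ 2) - ε * (1 + w ^ 2) * (s * w + c)
  have hlim (w : ℝ) : Tendsto (Q · w) (𝓝[>] 0) (𝓝 (w ^ 2 * (m - n * w ^ 2))) := by
    have hcont : Continuous (Q · w) := by fun_prop
    simpa [Q] using (hcont.tendsto 0).mono_left nhdsWithin_le_nhds
  obtain ⟨l, hl, hml⟩ : ∃ l > 0, n * l ^ 2 = m / 2 := by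
    refine ⟨√(m / (2 * n)), by positivity, ?_⟩
    rw [Real.sq_sqrt (by positivity)]
    field_simp
  have hpos (w : ℝ) (hw : w ^ 2 = l ^ 2) : ∀ᶠ ε in 𝓝[>] 0, 0 < Q ε w :=
    (hlim w).eventually_const_lt (by rw [hw, hml, sub_half]; positivity)
  have hneg (w : ℝ) (hw : w ^ 2 = 4 * l ^ 2) : ∀ᶠ ε in 𝓝[>] 0, Q ε w < 0 := by
    refine (hlim w).eventually_lt_const ?_
    rw [hw, show m - n * (4 * l ^ 2) = -m by linear_combination -4 * hml]
    nlinarith [mul_pos hm (pow_pos hl 2)]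
  obtain ⟨ε, h1, h2, h3, h4, hε⟩ := ((hneg (-2 * l) (by ring)).and <| (hpos (-l) (by ring)).and <|
    (hpos l rfl).and <| (hneg (2 * l) (by ring)).and self_mem_nhdsWithin).exists
  have h0 : Q ε 0 < 0 := by simpa [Q] using mul_pos hε hc
  have hx : StrictMono ![-2 * l, -l, 0, l, 2 * l] := by
    refine Fin.strictMono_iff_lt_succ.mpr fun i => ?_
    fin_cases i <;> simp <;> linarith
  obtain ⟨w, hw, -, hw0⟩ :=
    exists_strictMono_roots_of_mul_neg (P := Q ε) (by fun_prop) hx fun i => by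
      fin_cases i
      exacts [mul_neg_of_neg_of_pos h1 h2, mul_neg_of_pos_of_neg h2 h0,
        mul_neg_of_neg_of_pos h0 h3, mul_neg_of_pos_of_neg h3 h4]
  exact ⟨ε, w, hw.injective, hw0⟩

theorem cos_pos_of_abs_le_pi_div_four {φ : ℝ} (hφ : |φ| ≤ Real.pi / 4) : 0 < Real.cos φ := by
  have hπ := Real.pi_pos
  exact Real.cos_pos_of_mem_Ioo ⟨by linarith [(abs_le.mp hφ).1], by linarith [(abs_le.mp hφ).2]⟩

theorem mul_pow_five_lt_of_le {a x y : ℝ} (ha : 0 ≤ a) (hy : 0 < y) (hlt : a * y ^ 4 < 1)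
    (hxy : x ≤ y) : a * x ^ 5 < y := by
  have hodd : Odd 5 := by decide
  calc a * x ^ 5 ≤ a * y ^ 5 := mul_le_mul_of_nonneg_left (hodd.pow_le_pow.mpr hxy) ha
    _ = a * y ^ 4 * y := by ring
    _ < y := mul_lt_of_lt_one_left hy hlt

theorem exists_alternating_cos_test_points {φ : ℝ} (hφ₀ : 0 ≤ φ) (hφ : φ ≤ Real.pi / 4) :
    ∃ x : Fin 6 → ℝ, StrictMono x ∧ x 0 = 0 ∧ x (Fin.last 5) = Real.pi ∧
      ∀ i, Real.cos (5 * x i + φ) = (-1) ^ (i : ℕ) * Real.cos φ ∧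
        (-1) ^ (i : ℕ) * Real.cos (x i + φ) ≤ Real.cos φ := by
  have hπ := Real.pi_pos
  have hcos : 0 < Real.cos φ := cos_pos_of_abs_le_pi_div_four (by rwa [abs_of_nonneg hφ₀])
  have hphase (n : ℕ) : Real.cos (5 * (n * (Real.pi / 5)) + φ) = (-1) ^ n * Real.cos φ := by
    rw [← Real.cos_add_nat_mul_pi]
    ring_nf
  have hphase₃ : Real.cos (5 * ((3 * Real.pi - 2 * φ) / 5) + φ) = (-1) ^ 3 * Real.cos φ := by
    rw [← Real.cos_nat_mul_pi_sub]
    push_cast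
    ring_nf
  have h1 : (-1) ^ 1 * Real.cos (1 * (Real.pi / 5) + φ) ≤ Real.cos φ := by
    linarith [Real.cos_nonneg_of_mem_Icc (x := 1 * (Real.pi / 5) + φ)
      ⟨by linarith, by linarith⟩]
  have h2 : (-1) ^ 2 * Real.cos (2 * (Real.pi / 5) + φ) ≤ Real.cos φ := by
    rw [neg_one_sq, one_mul]
    exact Real.cos_le_cos_of_nonneg_of_le_pi hφ₀ (by linarith) (by linarith)
  have h3 : (-1) ^ 3 * Real.cos ((3 * Real.pi - 2 * φ) / 5 + φ) ≤ Real.cos φ := by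
    rw [Odd.neg_one_pow (by decide), neg_one_mul, ← Real.cos_pi_sub]
    exact Real.cos_le_cos_of_nonneg_of_le_pi hφ₀ (by linarith) (by linarith)
  have h4 : (-1) ^ 4 * Real.cos (4 * (Real.pi / 5) + φ) ≤ Real.cos φ := by
    linarith [Real.cos_nonpos_of_pi_div_two_le_of_le (x := 4 * (Real.pi / 5) + φ)
      (by linarith) (by linarith)]
  have h5 : (-1) ^ 5 * Real.cos (5 * (Real.pi / 5) + φ) ≤ Real.cos φ := by
    rw [mul_div_cancel₀ _ (by norm_num), add_comm, Real.cos_add_pi]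
    linarith
  refine ⟨![0 * (Real.pi / 5), 1 * (Real.pi / 5), 2 * (Real.pi / 5), (3 * Real.pi - 2 * φ) / 5,
    4 * (Real.pi / 5), 5 * (Real.pi / 5)], Fin.strictMono_iff_lt_succ.mpr fun i => ?_, zero_mul _,
    mul_div_cancel₀ _ (by norm_num), fun i => ?_⟩
  · fin_cases i <;> simp <;> linarith
  · fin_cases i
    exacts [⟨by exact_mod_cast hphase 0, by simp⟩, ⟨by exact_mod_cast hphase 1, h1⟩, ⟨hphase 2, h2⟩,
      ⟨hphase₃, h3⟩, ⟨hphase 4, h4⟩, ⟨hphase 5, h5⟩]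

-- Where `cos (5θ + φ) = ± cos φ`, the sign only depends on comparing `cos (θ + φ)` with `± cos φ`.
theorem exists_five_zeros_of_nonneg {a φ : ℝ} (ha : 0 ≤ a) (hφ₀ : 0 ≤ φ) (hφ : φ ≤ Real.pi / 4)
    (hlt : a * Real.cos φ ^ 4 < 1) :
    ∃ θ : Fin 5 → ℝ, Function.Injective θ ∧ (∀ j, θ j ∈ Set.Ioo 0 Real.pi) ∧
      ∀ j, a * Real.cos (θ j + φ) ^ 5 = Real.cos (5 * θ j + φ) := by
  have hcos : 0 < Real.cos φ := cos_pos_of_abs_le_pi_div_four (by rwa [abs_of_nonneg hφ₀])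
  obtain ⟨x, hx, hx0, hxπ, htest⟩ := exists_alternating_cos_test_points hφ₀ hφ
  let F (θ : ℝ) : ℝ := Real.cos (5 * θ + φ) - a * Real.cos (θ + φ) ^ 5
  have hsign (i : Fin 6) : 0 < (-1) ^ (i : ℕ) * F (x i) := by
    have h := mul_pow_five_lt_of_le ha hcos hlt (htest i).2
    have hF : (-1) ^ (i : ℕ) * F (x i) =
        Real.cos φ - a * ((-1) ^ (i : ℕ) * Real.cos (x i + φ)) ^ 5 := by
      simp only [F, (htest i).1]
      rcases neg_one_pow_eq_or ℝ (i : ℕ) with hi | hi <;> rw [hi] <;> ring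
    rw [hF]
    exact sub_pos.mpr h
  obtain ⟨θ, hθ, hmem, hθ0⟩ :=
    exists_strictMono_roots_of_mul_neg (P := F) (by fun_prop) hx fun i => by
      have h := mul_pos (hsign i.castSucc) (hsign i.succ)
      rw [Fin.val_castSucc, Fin.val_succ, pow_succ] at h
      rcases neg_one_pow_eq_or ℝ (i : ℕ) with hi | hi <;> rw [hi] at h <;> linarith
  rw [hx0, hxπ] at hmem
  exact ⟨θ, hθ.injective, hmem, fun j => (sub_eq_zero.mp (hθ0 j)).symm⟩

theorem exists_five_zeros {a φ : ℝ} (ha : 0 ≤ a) (hφ : |φ| ≤ Real.pi / 4)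
    (hlt : a * Real.cos φ ^ 4 < 1) :
    ∃ θ : Fin 5 → ℝ, Function.Injective θ ∧ (∀ j, θ j ∈ Set.Ioo 0 Real.pi) ∧
      ∀ j, a * Real.cos (θ j + φ) ^ 5 = Real.cos (5 * θ j + φ) := by
  rcases le_total 0 φ with hφ₀ | hφ₀
  · exact exists_five_zeros_of_nonneg ha hφ₀ (abs_le.mp hφ).2 hlt
  · obtain ⟨θ, hθ, hmem, hzero⟩ := exists_five_zeros_of_nonneg ha (neg_nonneg.mpr hφ₀)
      (neg_le.mp (abs_le.mp hφ).1) (by rwa [Real.cos_neg])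
    refine ⟨fun j => Real.pi - θ j, fun i j h => hθ (sub_right_injective h),
      fun j => ⟨by linarith [(hmem j).2], by linarith [(hmem j).1]⟩, fun j => ?_⟩
    have hleft : Real.cos (Real.pi - θ j + φ) = -Real.cos (θ j + -φ) := by
      rw [← Real.cos_pi_sub]
      ring_nf
    have hright : Real.cos (5 * (Real.pi - θ j) + φ) = -Real.cos (5 * θ j + -φ) := by
      rw [← Real.cos_pi_sub, ← Real.cos_add_int_mul_two_pi (Real.pi - _) 2]
      push_cast
      ring_nf
    rw [hleft, hright, ← hzero j]
    ring

end SignChanges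

section NormalQuintic

variable {a φ : ℝ}

theorem lin_zero_one_sq_dvd_binaryForm {d : ℕ} {α : ℕ → ℝ} (h0 : α 0 = 0) (h1 : α 1 = 0) :
    lin 0 1 ^ 2 ∣ binaryForm d α := by
  refine dvd_sum fun i _ => ?_
  match i with
  | 0 => simp [h0]
  | 1 => simp [h1]
  | i + 2 =>
    refine Dvd.dvd.mul_left ?_ _
    simpa [lin] using pow_dvd_pow (X 1 : MvPolynomial (Fin 2) ℝ) (Nat.le_add_left 2 i)

theorem lin_zero_one_sq_dvd_normalQuintic (h : a * Real.cos φ ^ 4 = 1) :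
    lin 0 1 ^ 2 ∣ binaryForm 5 (normalCoeff a φ) := by
  apply lin_zero_one_sq_dvd_binaryForm
  · simp only [normalCoeff, tsub_zero, pow_zero, mul_one, Complex.exp_ofReal_mul_I_re]
    linear_combination Real.cos φ * h
  · simp only [normalCoeff, Nat.add_one_sub_one, pow_one, mul_neg, Complex.mul_re, Complex.I_re,
      mul_zero, Complex.exp_ofReal_mul_I_im, Complex.I_im, mul_one, zero_sub, sub_neg_eq_add]
    linear_combination -Real.sin φ * h

theorem hasDecomp_normalQuintic (hφ : |φ| ≤ Real.pi / 4) (h : 1 < a * Real.cos φ ^ 4) :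
    HasDecomp (binaryForm 5 (normalCoeff a φ)) 5 4 := by
  have hcos := cos_pos_of_abs_le_pi_div_four hφ
  have ha : 0 < a := pos_of_mul_pos_left (one_pos.trans h) (by positivity)
  obtain ⟨ε, w, hw, hroot⟩ := exists_four_roots_of_perturbation (sub_pos.mpr h)
    (show 0 < a * Real.cos φ ^ 2 * Real.sin φ ^ 2 + 1 by positivity) hcos (Real.sin φ)
  set s := Real.sin φ with hs
  set c := Real.cos φ with hc
  refine hasDecomp_of_catalecticant_mulVec_eq_zero (m := 1) hw
    (q := ![-(a * c ^ 2 * s ^ 2 + 1), -(ε * s), a * c ^ 4 - 1 - ε * c, -(ε * s), -(ε * c)])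
    ?_ (fun j => ?_) (funext fun i => ?_)
  · have hpos : 0 < a * c ^ 2 * s ^ 2 + 1 := by positivity
    exact neg_ne_zero.mpr hpos.ne'
  · simp [Fin.sum_univ_five]
    linear_combination hroot j
  · rw [catalecticant_mulVec_apply, Fin.sum_univ_five]
    fin_cases i <;>
      simp [normalCoeff, Complex.exp_ofReal_mul_I_re, Complex.exp_ofReal_mul_I_im, ← hs, ← hc]
    · ring
    · ring

theorem eval_cos_sin_normalQuintic (a φ θ : ℝ) :
    eval ![Real.cos θ, Real.sin θ] (binaryForm 5 (normalCoeff a φ)) =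
      a * Real.cos (θ + φ) ^ 5 - Real.cos (5 * θ + φ) := by
  have hexp : (Real.cos θ + Real.sin θ * Complex.I : ℂ) = Complex.exp (θ * Complex.I) := by
    rw [Complex.exp_mul_I, Complex.ofReal_cos, Complex.ofReal_sin]
  rw [eval_normalQuintic]
  simp only [cons_val_zero, cons_val_one]
  rw [hexp, ← Complex.exp_nat_mul, ← Complex.exp_add, ← Complex.exp_add,
    show φ * Complex.I + θ * Complex.I = (θ + φ : ℝ) * Complex.I by push_cast; ring,
    show φ * Complex.I + (5 : ℕ) * (θ * Complex.I) = (5 * θ + φ : ℝ) * Complex.I by push_cast; ring,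
    Complex.exp_ofReal_mul_I_re, Complex.exp_ofReal_mul_I_re]

theorem splitsDistinct_normalQuintic (ha : 0 ≤ a) (hφ : |φ| ≤ Real.pi / 4)
    (h : a * Real.cos φ ^ 4 < 1) : SplitsDistinct (binaryForm 5 (normalCoeff a φ)) 5 := by
  obtain ⟨θ, hθ, hmem, hzero⟩ := exists_five_zeros ha hφ h
  refine splitsDistinct_of_eval_cos_sin_eq_zero (isHomogeneous_binaryForm _) (fun h0 => ?_) hθ hmem
    fun j => by rw [eval_cos_sin_normalQuintic, hzero, sub_self]
  have hval := eval_cos_sin_normalQuintic a φ 0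
  rw [h0, map_zero, mul_zero, zero_add] at hval
  linarith [mul_pow_five_lt_of_le ha (cos_pos_of_abs_le_pi_div_four hφ) h le_rfl]

end NormalQuintic

theorem mulVec_maximalMinors_eq_zero {R : Type*} [CommRing R] {n : ℕ}
    (A : Matrix (Fin n) (Fin (n + 1)) R) :
    A *ᵥ (fun k => (-1) ^ (k : ℕ) * (A.submatrix id k.succAbove).det) = 0 := by
  funext i
  -- Laplace expansion of the square matrix in which row `i` of `A` is repeated on top.
  have hdet : (of (vecCons (A i) A)).det = 0 := det_zero_of_row_eq (Fin.succ_ne_zero i).symm rfl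
  rw [Pi.zero_apply, ← hdet, det_succ_row_zero, mulVec, dotProduct]
  refine sum_congr rfl fun k _ => ?_
  rw [← mul_assoc, mul_comm (A i k)]
  rfl

section RankFour

variable {α : ℕ → ℝ} {t : ℝ} {z : ℂ}

theorem coeffs_eq_smul_realComplexCubic {P : Cubic ℝ}
    (hP : P.toPoly.map (algebraMap ℝ ℂ) = Polynomial.C (algebraMap ℝ ℂ P.a) *
      ((Polynomial.X - Polynomial.C (t : ℂ)) * ((Polynomial.X - Polynomial.C z) *
        (Polynomial.X - Polynomial.C (starRingEnd ℂ z))))) :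
    ![P.a, P.b, P.c, P.d] = P.a • realComplexCubic t z := by
  rw [← Cubic.map_toPoly, ← mul_assoc, ← mul_assoc, Cubic.C_mul_prod_X_sub_C_eq,
    Complex.coe_algebraMap] at hP
  obtain ⟨-, hbC, hcC, hdC⟩ := Cubic.mk.inj ((Cubic.toPoly_injective _ _).mp hP)
  have hadd : z + starRingEnd ℂ z = (2 * z.re : ℝ) := Complex.add_conj z
  have hmul : z * starRingEnd ℂ z = Complex.normSq z := Complex.mul_conj z
  have hb : P.b = P.a * -(t + 2 * z.re) := by
    rw [add_assoc, hadd, Complex.coe_algebraMap] at hbC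
    exact_mod_cast hbC
  have hc : P.c = P.a * (2 * z.re * t + Complex.normSq z) := by
    rw [← mul_add, hadd, hmul, mul_comm (t : ℂ), Complex.coe_algebraMap] at hcC
    exact_mod_cast hcC
  have hd : P.d = P.a * -(t * Complex.normSq z) := by
    rw [mul_assoc (t : ℂ), hmul, Complex.coe_algebraMap] at hdC
    exact_mod_cast hdC
  simp [hb, hc, hd, realComplexCubic]

/-- The cubic polynomial `g` whose coefficients are the signed maximal minors of the `3 × 4`
catalecticant. They span its kernel when the rank is three, so `g` is then the apolar cubic. -/
def minorCubic (α : ℕ → ℝ) : Cubic ℝ where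
  a := (!![α 1, α 2, α 3; α 2, α 3, α 4; α 3, α 4, α 5]).det
  b := -(!![α 0, α 2, α 3; α 1, α 3, α 4; α 2, α 4, α 5]).det
  c := (!![α 0, α 1, α 3; α 1, α 2, α 4; α 2, α 3, α 5]).det
  d := -(!![α 0, α 1, α 2; α 1, α 2, α 3; α 2, α 3, α 4]).det

theorem catalecticant_mulVec_minorCubic (α : ℕ → ℝ) :
    catalecticant 2 3 α *ᵥ ![(minorCubic α).a, (minorCubic α).b, (minorCubic α).c,
      (minorCubic α).d] = 0 := by
  rw [← mulVec_maximalMinors_eq_zero (catalecticant 2 3 α)]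
  congr 1
  ext k
  fin_cases k <;> simp [minorCubic, catalecticant, det_fin_three, Fin.succAbove]
  ring

theorem catalecticant_mulVec_realComplexCubic_eq_zero (ha : (minorCubic α).a ≠ 0)
    (hfac : (minorCubic α).toPoly.map (algebraMap ℝ ℂ) =
      Polynomial.C (algebraMap ℝ ℂ (minorCubic α).a) *
        ((Polynomial.X - Polynomial.C (t : ℂ)) * ((Polynomial.X - Polynomial.C z) *
          (Polynomial.X - Polynomial.C (starRingEnd ℂ z))))) :
    catalecticant 2 3 α *ᵥ realComplexCubic t z = 0 := by
  have h := catalecticant_mulVec_minorCubic α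
  rw [coeffs_eq_smul_realComplexCubic hfac, mulVec_smul] at h
  exact (smul_eq_zero_iff_right ha).mp h

theorem hasDecomp_four_of_catalecticant_mulVec_eq_zero (hsf : SquarefreeC (binaryForm 5 α))
    (hsplit : ¬ SplitsDistinct (binaryForm 5 α) 5) (hz : z.im ≠ 0)
    (hker : catalecticant 2 3 α *ᵥ realComplexCubic t z = 0) : HasDecomp (binaryForm 5 α) 5 4 := by
  obtain ⟨c, γ, hα⟩ := exists_real_add_re_of_catalecticant_mulVec_eq_zero hz hker
  have hγ : γ ≠ 0 := by
    rintro rfl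
    have hdvd := lin_pow_dvd_binaryForm (c := c) (t := t) (d := 5) (α := α) (by simpa using hα)
    exact not_squarefreeC_of_lin_sq_dvd ((pow_dvd_pow _ (by norm_num)).trans hdvd) hsf
  obtain ⟨ρ, a, φ, A, hρ, ha, hφ, hA, hform⟩ := exists_eq_C_mul_subst_normalQuintic hz hγ hα
  rw [hform] at hsf hsplit ⊢
  rcases lt_trichotomy (a * Real.cos φ ^ 4) 1 with h | h | h
  · exact absurd (((splitsDistinct_normalQuintic ha hφ h).subst hA).C_mul hρ) hsplit
  · exact absurd hsf <| not_squarefreeC_of_lin_sq_dvd <|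
      lin_sq_dvd_C_mul_subst (lin_zero_one_sq_dvd_normalQuintic h) ρ A
  · exact (hasDecomp_normalQuintic hφ h).C_mul_subst ρ hA

theorem realRank_binaryForm_eq_four (hsf : SquarefreeC (binaryForm 5 α))
    (hsplit : ¬ SplitsDistinct (binaryForm 5 α) 5) (hrank : (catalecticant 2 3 α).rank = 3)
    (hz : z.im ≠ 0) (hker : catalecticant 2 3 α *ᵥ realComplexCubic t z = 0) :
    realRank (binaryForm 5 α) 5 = 4 := by
  have hfour := hasDecomp_four_of_catalecticant_mulVec_eq_zero hsf hsplit hz hker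
  exact le_antisymm (Nat.sInf_le hfour)
    (le_csInf ⟨4, hfour⟩ fun _ hr => four_le_of_hasDecomp hsf hrank hz hker hr)

end RankFour

/-- rank-4 criterion for quintics. If `f` does not have five real
roots, its Hankel matrix has rank 3, and the cubic `g` of `3×3` minors has degree 3
with exactly one real root `t` and a pair of distinct complex conjugate roots
`z, z̄`, then the real rank of `f` is 4. -/
theorem stmt19 (α₀ α₁ α₂ α₃ α₄ α₅ : ℝ) (f : MvPolynomial (Fin 2) ℝ)
    (hf : f = C α₀ * X 0 ^ 5 + C (5 * α₁) * X 0 ^ 4 * X 1 +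
      C (10 * α₂) * X 0 ^ 3 * X 1 ^ 2 + C (10 * α₃) * X 0 ^ 2 * X 1 ^ 3 +
      C (5 * α₄) * X 0 * X 1 ^ 4 + C α₅ * X 1 ^ 5)
    (hsf : SquarefreeC f)
    (hnot5 : ¬ SplitsDistinct f 5)
    (hrk : (!![α₀, α₁, α₂, α₃; α₁, α₂, α₃, α₄; α₂, α₃, α₄, α₅]).rank = 3)
    (g : Polynomial ℝ)
    (hg : g = Polynomial.C (!![α₁, α₂, α₃; α₂, α₃, α₄; α₃, α₄, α₅]).det * Polynomial.X ^ 3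
      - Polynomial.C (!![α₀, α₂, α₃; α₁, α₃, α₄; α₂, α₄, α₅]).det * Polynomial.X ^ 2
      + Polynomial.C (!![α₀, α₁, α₃; α₁, α₂, α₄; α₂, α₃, α₅]).det * Polynomial.X
      - Polynomial.C (!![α₀, α₁, α₂; α₁, α₂, α₃; α₂, α₃, α₄]).det)
    (hdeg : g.degree = 3)
    (t : ℝ) (z : ℂ) (hz : z.im ≠ 0)
    (hfac : g.map (algebraMap ℝ ℂ) =
      Polynomial.C ((algebraMap ℝ ℂ) (!![α₁, α₂, α₃; α₂, α₃, α₄; α₃, α₄, α₅]).det) *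
        ((Polynomial.X - Polynomial.C (t : ℂ)) * ((Polynomial.X - Polynomial.C z) *
          (Polynomial.X - Polynomial.C (starRingEnd ℂ z))))) :
    realRank f 5 = 4 := by
  let α (i : ℕ) : ℝ := [α₀, α₁, α₂, α₃, α₄, α₅].getD i 0
  have hform : f = binaryForm 5 α := by
    simp [hf, binaryForm, sum_range_succ, α, Nat.choose, map_ofNat (C (σ := Fin 2) (R := ℝ))]
  have hcat : !![α₀, α₁, α₂, α₃; α₁, α₂, α₃, α₄; α₂, α₃, α₄, α₅] = catalecticant 2 3 α := by
    ext i j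
    fin_cases i <;> fin_cases j <;> rfl
  have hgα : g = (minorCubic α).toPoly := by
    simp only [hg, Cubic.toPoly, minorCubic, map_neg, neg_mul, sub_eq_add_neg]
    rfl
  have ha : (minorCubic α).a ≠ 0 := fun h => by
    have hle := Cubic.degree_of_a_eq_zero h
    rw [← hgα, hdeg] at hle
    exact absurd hle (by decide)
  have hker := catalecticant_mulVec_realComplexCubic_eq_zero ha (hgα ▸ hfac)
  rw [hcat] at hrk
  rw [hform] at hsf hnot5 ⊢
  exact realRank_binaryForm_eq_four hsf hnot5 hrk hz hker
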